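/- arXiv:2404.10349 — 4 statements merged into one kernel-verified Lean document; each statement's English description precedes it below -/
import Mathlib

section
/- Let a₁ = e^{iπ/4}·diag(−1,1,1,1) and a₂ = e^{iπ/4}·diag(1,−1,1,1) as 4×4 complex matrices. Then there is no invertible 4×4 complex matrix c and no integer r such that c⁻¹·a₂·c = i^r·(a₁·a₂). (Consequently, the order-3 automorphism a₁ ↦ a₂, a₂ ↦ a₁a₂ of the rephasing group generated by a₁ and a₂ cannot be realized by conjugation with any invertible matrix, even up to a power of i.) -/
open Complex Matrix

/-- With `a₁ = e^{iπ/4}·diag(−1,1,1,1)` and `a₂ = e^{iπ/4}·diag(1,−1,1,1)`, there is no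
invertible 4×4 complex matrix `c` and no integer `r` with `c⁻¹·a₂·c = i^r·(a₁·a₂)`:
the order-3 automorphism `a₁ ↦ a₂, a₂ ↦ a₁a₂` cannot be realized by conjugation, even up
to a power of `i`. -/
theorem no_conjugation_Z2Z2_order3 :
    ∀ a₁ a₂ : Matrix (Fin 4) (Fin 4) ℂ,
      a₁ = Complex.exp (Real.pi * Complex.I / 4) • Matrix.diagonal ![-1, 1, 1, 1] →
      a₂ = Complex.exp (Real.pi * Complex.I / 4) • Matrix.diagonal ![1, -1, 1, 1] →
      ¬ ∃ (c : Matrix (Fin 4) (Fin 4) ℂ) (r : ℤ),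
          IsUnit c ∧ c⁻¹ * a₂ * c = (Complex.I ^ r) • (a₁ * a₂) := by
  rintro a₁ a₂ h₁ h₂ ⟨c, r, hc, h⟩
  have hdet : IsUnit c.det := (Matrix.isUnit_iff_isUnit_det c).mp hc
  have ht := congrArg Matrix.trace h
  rw [Matrix.trace_mul_comm, ← Matrix.mul_assoc, Matrix.mul_nonsing_inv c hdet,
    Matrix.one_mul, h₁, h₂] at ht
  have he := Complex.exp_ne_zero (Real.pi * Complex.I / 4)
  generalize Complex.exp (Real.pi * Complex.I / 4) = e at ht he
  simp only [Matrix.smul_mul, Matrix.mul_smul, Matrix.diagonal_mul_diagonal, Matrix.trace_smul,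
    Matrix.trace_diagonal, smul_eq_mul] at ht
  simp [Fin.sum_univ_four] at ht
  exact he ht
end

section
/- Let a₁ = e^{iπ/4}·diag(i,−1,−i,1) and a₂ = e^{iπ/4}·diag(1,−1,1,1) as 4×4 complex matrices. Suppose b is an invertible 4×4 complex matrix and r₁, r₂ are integers such that a₁·b = i^{r₁}·b·a₁³ and a₂·b = i^{r₂}·b·a₂. Then i^{r₁} = −i, i^{r₂} = 1, and b has nonzero entries only in the positions (1,3), (2,2), (3,1), (4,4); that is, b_{jk} = 0 for every (j,k) not in {(1,3),(2,2),(3,1),(4,4)}. -/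
open Complex Matrix

/-- With `a₁ = e^{iπ/4}·diag(i,−1,−i,1)` and `a₂ = e^{iπ/4}·diag(1,−1,1,1)`, if an
invertible matrix `b` satisfies `a₁·b = i^{r₁}·b·a₁³` and `a₂·b = i^{r₂}·b·a₂`, then
`i^{r₁} = −i`, `i^{r₂} = 1`, and `b` is supported on the entries
`(1,3), (2,2), (3,1), (4,4)` (0-indexed: `(0,2), (1,1), (2,0), (3,3)`). -/
theorem solution_shape_first_Z2_option1 :
    ∀ (a₁ a₂ b : Matrix (Fin 4) (Fin 4) ℂ) (r₁ r₂ : ℤ),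
      a₁ = Complex.exp (Real.pi * Complex.I / 4) •
             Matrix.diagonal ![Complex.I, -1, -Complex.I, 1] →
      a₂ = Complex.exp (Real.pi * Complex.I / 4) • Matrix.diagonal ![1, -1, 1, 1] →
      IsUnit b →
      a₁ * b = (Complex.I ^ r₁) • (b * a₁ ^ 3) →
      a₂ * b = (Complex.I ^ r₂) • (b * a₂) →
      Complex.I ^ r₁ = -Complex.I ∧ Complex.I ^ r₂ = 1 ∧
      ∀ j k : Fin 4,
        (j, k) ∉ ({((0 : Fin 4), (2 : Fin 4)), (1, 1), (2, 0), (3, 3)} :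
          Set (Fin 4 × Fin 4)) → b j k = 0 := by
  intro a₁ a₂ b r₁ r₂ h1 h2 hb e1 e2
  have hdet : b.det ≠ 0 := ((Matrix.isUnit_iff_isUnit_det b).1 hb).ne_zero
  generalize Complex.I ^ r₁ = s at *
  generalize Complex.I ^ r₂ = t at *
  have hw0 : Complex.exp (Real.pi * Complex.I / 4) ≠ 0 := Complex.exp_ne_zero _
  have hw2 : Complex.exp (Real.pi * Complex.I / 4) ^ 2 = Complex.I := by
    rw [← Complex.exp_nat_mul]
    refine Eq.trans ?_ Complex.exp_pi_div_two_mul_I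
    congr 1
    push_cast
    ring
  generalize Complex.exp (Real.pi * Complex.I / 4) = w at *
  have E2 : ∀ j k : Fin 4, (![1, -1, 1, 1] : Fin 4 → ℂ) j * b j k
      = t * (b j k * (![1, -1, 1, 1] : Fin 4 → ℂ) k) := by
    intro j k
    have h := congrFun (congrFun e2 j) k
    rw [h2] at h
    simp only [Matrix.smul_mul, Matrix.mul_smul, Matrix.smul_apply, Matrix.diagonal_mul,
      Matrix.mul_diagonal, smul_eq_mul] at h
    apply mul_left_cancel₀ hw0
    linear_combination h
  have E1 : ∀ j k : Fin 4, (![Complex.I, -1, -Complex.I, 1] : Fin 4 → ℂ) j * b j k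
      = s * Complex.I * (b j k * (![Complex.I, -1, -Complex.I, 1] : Fin 4 → ℂ) k ^ 3) := by
    intro j k
    have h := congrFun (congrFun e1 j) k
    rw [h1, smul_pow, Matrix.diagonal_pow] at h
    simp only [Matrix.smul_mul, Matrix.mul_smul, Matrix.smul_apply, Matrix.diagonal_mul,
      Matrix.mul_diagonal, smul_eq_mul, Pi.pow_apply] at h
    apply mul_left_cancel₀ hw0
    linear_combination h + s * w * (b j k * (![Complex.I, -1, -Complex.I, 1] : Fin 4 → ℂ) k ^ 3) * hw2
  have ht : t = 1 := by
    by_contra hne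
    have key : ∀ z : ℂ, z = t * z → z = 0 := by
      intro z hz
      have h3 : (t - 1) * z = 0 := by linear_combination -hz
      exact (mul_eq_zero.1 h3).resolve_left (sub_ne_zero.2 hne)
    have h00 : b 0 0 = 0 := key _ (by simpa using E2 0 0)
    have h02 : b 0 2 = 0 := key _ (by simpa using E2 0 2)
    have h03 : b 0 3 = 0 := key _ (by simpa using E2 0 3)
    have h20 : b 2 0 = 0 := key _ (by simpa using E2 2 0)
    have h22 : b 2 2 = 0 := key _ (by simpa using E2 2 2)
    have h23 : b 2 3 = 0 := key _ (by simpa using E2 2 3)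
    apply hdet
    simp [Matrix.det_succ_row_zero, Fin.sum_univ_succ, Fin.succAbove, h00, h02, h03, h20, h22, h23]
  subst ht
  have h10 : b 1 0 = 0 := by
    have h := E2 1 0
    simp at h
    linear_combination (-1/2) * h
  have h12 : b 1 2 = 0 := by
    have h := E2 1 2
    simp at h
    linear_combination (-1/2) * h
  have h13 : b 1 3 = 0 := by
    have h := E2 1 3
    simp at h
    linear_combination (-1/2) * h
  have h11 : b 1 1 ≠ 0 := by
    intro h11
    apply hdet
    apply Matrix.det_eq_zero_of_row_eq_zero 1
    intro k
    fin_cases k <;> assumption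
  have hs : s * Complex.I = 1 := by
    have h := E1 1 1
    simp at h
    apply mul_right_cancel₀ h11
    linear_combination h
  refine ⟨by linear_combination (-Complex.I) * hs + s * Complex.I_sq, rfl, ?_⟩
  intro j k hjk
  have h := E1 j k
  rw [hs] at h
  have key : ∀ c : ℂ, c ≠ 0 → c * b j k = 0 → b j k = 0 := fun c hc h0 =>
    (mul_eq_zero.1 h0).resolve_left hc
  have hI : (![Complex.I, -1, -Complex.I, 1] : Fin 4 → ℂ) j
      - (![Complex.I, -1, -Complex.I, 1] : Fin 4 → ℂ) k ^ 3 ≠ 0 := by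
    clear h key E1 E2 e1 e2
    fin_cases j <;> fin_cases k <;>
      first
      | (exfalso; revert hjk; simp; done)
      | (intro h; simp [Complex.ext_iff, pow_succ] at h; done)
      | (intro h; simp [Complex.ext_iff, pow_succ] at h; norm_num at h; done)
  exact key _ hI (by linear_combination h)
end

section
/- Let a₁ = e^{iπ/4}·diag(−1,1,1,1), a₂ = e^{iπ/4}·diag(1,−1,1,1), and a₃ = e^{iπ/4}·diag(1,1,−1,1) as 4×4 complex matrices. Then there is no invertible 4×4 complex matrix f and no integer r such that f⁻¹·a₃·f = i^r·(a₂·a₃). (Consequently, the order-7 automorphism a₁ ↦ a₃, a₂ ↦ a₁, a₃ ↦ a₂a₃ of the sign-flip group (ℤ/2)³ cannot be realized by conjugation with any invertible matrix, even up to a power of i; hence extensions by ℤ/7, and by any group containing ℤ/7, are impossible in the 4HDM.) -/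
open Complex Matrix

/-- With `a₁ = e^{iπ/4}·diag(−1,1,1,1)`, `a₂ = e^{iπ/4}·diag(1,−1,1,1)` and
`a₃ = e^{iπ/4}·diag(1,1,−1,1)`, there is no invertible 4×4 complex matrix `f` and no
integer `r` with `f⁻¹·a₃·f = i^r·(a₂·a₃)`: the order-7 automorphism
`a₁ ↦ a₃, a₂ ↦ a₁, a₃ ↦ a₂a₃` of the sign-flip group `(ℤ/2)³` cannot be realized by
conjugation, even up to a power of `i`. -/
theorem no_conjugation_Z2cubed_order7 :
    ∀ a₁ a₂ a₃ : Matrix (Fin 4) (Fin 4) ℂ,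
      a₁ = Complex.exp (Real.pi * Complex.I / 4) • Matrix.diagonal ![-1, 1, 1, 1] →
      a₂ = Complex.exp (Real.pi * Complex.I / 4) • Matrix.diagonal ![1, -1, 1, 1] →
      a₃ = Complex.exp (Real.pi * Complex.I / 4) • Matrix.diagonal ![1, 1, -1, 1] →
      ¬ ∃ (f : Matrix (Fin 4) (Fin 4) ℂ) (r : ℤ),
          IsUnit f ∧ f⁻¹ * a₃ * f = (Complex.I ^ r) • (a₂ * a₃) := by
  rintro a₁ a₂ a₃ - h₂ h₃ ⟨f, r, hf, h⟩
  have hd : IsUnit f.det := (Matrix.isUnit_iff_isUnit_det f).mp hf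
  have ht := congrArg Matrix.trace h
  rw [Matrix.trace_mul_comm, ← Matrix.mul_assoc, Matrix.mul_nonsing_inv f hd,
    Matrix.one_mul, h₂, h₃] at ht
  have he := Complex.exp_ne_zero (Real.pi * Complex.I / 4)
  generalize Complex.exp (Real.pi * Complex.I / 4) = e at ht he
  have hl : (e • Matrix.diagonal ![(1 : ℂ), 1, -1, 1]).trace = 2 * e := by
    rw [Matrix.trace_smul, Matrix.trace_diagonal]
    simp [Fin.sum_univ_four]
    ring
  have hr : ((e • Matrix.diagonal ![(1 : ℂ), -1, 1, 1]) *
      (e • Matrix.diagonal ![(1 : ℂ), 1, -1, 1])).trace = 0 := by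
    rw [Matrix.smul_mul, Matrix.mul_smul, Matrix.diagonal_mul_diagonal,
      Matrix.trace_smul, Matrix.trace_smul, Matrix.trace_diagonal]
    simp [Fin.sum_univ_four]
  rw [hl, Matrix.trace_smul, hr, smul_zero] at ht
  exact he (by simpa using ht)
end

section
/- Let ℤ/3 act on the elementary abelian group (ℤ/2)³ = (Fin 3 → ℤ/2) by cyclically permuting the three coordinates (the generator sends the coordinate function v to v ∘ σ where σ is a 3-cycle on the index set). Then the semidirect product (ℤ/2)³ ⋊ ℤ/3 formed with respect to this action is isomorphic to the direct product ℤ/2 × A₄, where A₄ is the alternating group on four letters. -/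
namespace Z2A4

/-- The double transpositions `(01)(23)`, `(02)(13)`, `(03)(12)`. -/
def pa : Equiv.Perm (Fin 4) := Equiv.swap 0 1 * Equiv.swap 2 3
def pb : Equiv.Perm (Fin 4) := Equiv.swap 0 2 * Equiv.swap 1 3
def pc : Equiv.Perm (Fin 4) := Equiv.swap 0 3 * Equiv.swap 1 2
/-- The 3-cycle `1 → 3 → 2 → 1`. -/
def pg : Equiv.Perm (Fin 4) := Equiv.swap 1 2 * Equiv.swap 1 3

/-- `ZMod 3` is `Fin 3`. -/
def sh (k : ZMod 3) : Fin 3 := k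

def F (v : Fin 3 → ZMod 2) : Equiv.Perm (Fin 4) :=
  pa ^ (v 0).val * pb ^ (v 1).val * pc ^ (v 2).val

def G (k : ZMod 3) : Equiv.Perm (Fin 4) := pg ^ k.val

lemma F_sign : ∀ v, F v ∈ alternatingGroup (Fin 4) := by
  simp only [Equiv.Perm.mem_alternatingGroup]
  decide +kernel

lemma G_sign : ∀ v, G v ∈ alternatingGroup (Fin 4) := by
  simp only [Equiv.Perm.mem_alternatingGroup]
  decide +kernel

lemma F_add : ∀ v w, F (v + w) = F v * F w := by decide +kernel
lemma G_add : ∀ v w, G (v + w) = G v * G w := by decide +kernel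
lemma conj_eq : ∀ (k : ZMod 3) (v : Fin 3 → ZMod 2),
    F (fun i => v (i + sh k)) = G k * F v * (G k)⁻¹ := by decide +kernel
lemma sum_eq : ∀ (k : ZMod 3) (v : Fin 3 → ZMod 2),
    (v (0 + sh k) + v (1 + sh k) + v (2 + sh k)) = v 0 + v 1 + v 2 := by decide +kernel
lemma inj : ∀ (v : Fin 3 → ZMod 2) (k : ZMod 3), v 0 + v 1 + v 2 = 0 → F v * G k = 1 →
    v = 0 ∧ k = 0 := by decide +kernel

def f1 : Multiplicative (Fin 3 → ZMod 2) →* Multiplicative (ZMod 2) × alternatingGroup (Fin 4) :=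
  MonoidHom.mk' (fun v => (Multiplicative.ofAdd (v.toAdd 0 + v.toAdd 1 + v.toAdd 2),
    ⟨F v.toAdd, F_sign _⟩)) (by
    intro v w
    refine Prod.ext ?_ (Subtype.ext (F_add _ _))
    apply Multiplicative.toAdd.injective
    simp
    abel)

def f2 : Multiplicative (ZMod 3) →* Multiplicative (ZMod 2) × alternatingGroup (Fin 4) :=
  MonoidHom.mk' (fun k => (1, ⟨G k.toAdd, G_sign _⟩)) (by
    intro v w
    exact Prod.ext (by simp) (Subtype.ext (G_add _ _)))

end Z2A4


/-- Let `ℤ/3` act on `(ℤ/2)³ = (Fin 3 → ℤ/2)` by cyclically permuting the coordinates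
(the generator sends `v` to `fun i => v (i + 1)`).  The corresponding semidirect product
`(ℤ/2)³ ⋊ ℤ/3` is isomorphic to `ℤ/2 × A₄`. -/
theorem semidirect_Z2cubed_Z3_iso_Z2_prod_A4
    (φ : Multiplicative (ZMod 3) →* MulAut (Multiplicative (Fin 3 → ZMod 2)))
    (hφ : ∀ v : Fin 3 → ZMod 2,
      Multiplicative.toAdd (φ (Multiplicative.ofAdd 1) (Multiplicative.ofAdd v)) =
        fun i => v (i + 1)) :
    Nonempty (SemidirectProduct (Multiplicative (Fin 3 → ZMod 2)) (Multiplicative (ZMod 3)) φ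
      ≃* Multiplicative (ZMod 2) × alternatingGroup (Fin 4)) := by

  have key : ∀ (k : ZMod 3) (v : Fin 3 → ZMod 2),
      φ (Multiplicative.ofAdd k) (Multiplicative.ofAdd v) =
        Multiplicative.ofAdd (fun i : Fin 3 => v (i + Z2A4.sh k)) := by
    have h1 : ∀ v : Fin 3 → ZMod 2, φ (Multiplicative.ofAdd 1) (Multiplicative.ofAdd v) =
        Multiplicative.ofAdd (fun i : Fin 3 => v (i + 1)) := fun v =>
      Multiplicative.toAdd.injective (hφ v)
    have h0 : ∀ v : Fin 3 → ZMod 2, φ (Multiplicative.ofAdd 0) (Multiplicative.ofAdd v) =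
        Multiplicative.ofAdd (fun i : Fin 3 => v (i + 0)) := fun v => by simp
    have h2 : ∀ v : Fin 3 → ZMod 2, φ (Multiplicative.ofAdd 2) (Multiplicative.ofAdd v) =
        Multiplicative.ofAdd (fun i : Fin 3 => v (i + 2)) := fun v => by
      have e : (Multiplicative.ofAdd (2 : ZMod 3)) =
        Multiplicative.ofAdd 1 * Multiplicative.ofAdd 1 := rfl
      rw [e, map_mul, MulAut.mul_apply, h1, h1]
      congr 1
      funext i
      fin_cases i <;> rfl
    intro k
    have hk : k = 0 ∨ k = 1 ∨ k = 2 := by revert k; decide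
    rcases hk with rfl | rfl | rfl
    · exact h0
    · exact h1
    · exact h2
  let f := SemidirectProduct.lift (φ := φ) Z2A4.f1 Z2A4.f2 (by
    intro k
    refine MonoidHom.ext fun v => ?_
    change Z2A4.f1 (φ (Multiplicative.ofAdd k.toAdd) (Multiplicative.ofAdd v.toAdd)) =
      Z2A4.f2 k * Z2A4.f1 v * (Z2A4.f2 k)⁻¹
    rw [key]
    refine Prod.ext ?_ (Subtype.ext (Z2A4.conj_eq _ _))
    rw [Prod.fst_mul, Prod.fst_mul, mul_comm, ← mul_assoc, Prod.fst_inv, inv_mul_cancel, one_mul]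
    exact congrArg Multiplicative.ofAdd (Z2A4.sum_eq k.toAdd v.toAdd))
  refine ⟨MulEquiv.ofBijective f ?_⟩
  have hinj : Function.Injective f := by
    rw [injective_iff_map_eq_one]
    rintro ⟨v, k⟩ h
    have h' : Z2A4.f1 v * Z2A4.f2 k = 1 := h
    have ha := congrArg Prod.fst h'
    have hb := congrArg (fun x => (x.2 : Equiv.Perm (Fin 4))) h'
    rw [Prod.fst_mul] at ha
    replace ha := (mul_one (Z2A4.f1 v).1).symm.trans ha
    obtain ⟨hv, hk⟩ := Z2A4.inj v.toAdd k.toAdd (congrArg Multiplicative.toAdd ha) hb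
    exact SemidirectProduct.ext hv hk
  rw [Nat.bijective_iff_injective_and_card]
  refine ⟨hinj, ?_⟩
  rw [SemidirectProduct.card, Nat.card_prod, nat_card_alternatingGroup]
  simp [Nat.card_eq_fintype_card, Fintype.card_multiplicative, Nat.factorial]
end
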